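/- For the weight a = (3,5,6) (the weight of the Q₁₂-singularity), there exist 3×3 matrices C and D with non-negative integer entries such that |det D| = 1, B_a = C·D, (3,5,6) = (1,1,1)·D, and f_C has an isolated critical point at the origin of ℂ³ (all partial derivatives of f_C vanish at 0, and there is a punctured neighborhood of 0 containing no critical point of f_C); moreover any such C satisfies |det C| = 15. -/

import Mathlib

open Matrix BigOperators

noncomputable section

/-- `f_C(x,y,z) = Σ_{i=1}^{3} x^{c_{i1}} y^{c_{i2}} z^{c_{i3}}` for a 3×3 matrix `C`
with non-negative integer entries. -/
def fC (C : Matrix (Fin 3) (Fin 3) ℕ) : (Fin 3 → ℂ) → ℂ :=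
  fun v => ∑ i : Fin 3, ∏ j : Fin 3, v j ^ C i j

/-- `φ_D(u₁,u₂,u₃) = (u₁^{d_{i1}} u₂^{d_{i2}} u₃^{d_{i3}})_{i=1}^{3}`. -/
def phiD (D : Matrix (Fin 3) (Fin 3) ℕ) : (Fin 3 → ℂ) → (Fin 3 → ℂ) :=
  fun u i => ∏ j : Fin 3, u j ^ D i j

/-- The matrix `B_a` with rows `(a₁+1,a₂,a₃)`, `(a₁,a₂+1,a₃)`, `(a₁,a₂,a₃+1)`. -/
def Bmat (a : Fin 3 → ℕ) : Matrix (Fin 3) (Fin 3) ℕ :=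
  fun i j => a j + if i = j then 1 else 0

/-- `G_a(u₁,u₂,u₃) = u₁^{a₁+1}u₂^{a₂}u₃^{a₃} + u₁^{a₁}u₂^{a₂+1}u₃^{a₃} + u₁^{a₁}u₂^{a₂}u₃^{a₃+1}`. -/
def Ga (a : Fin 3 → ℕ) : (Fin 3 → ℂ) → ℂ :=
  fun u => u 0 ^ (a 0 + 1) * u 1 ^ a 1 * u 2 ^ a 2
         + u 0 ^ a 0 * u 1 ^ (a 1 + 1) * u 2 ^ a 2
         + u 0 ^ a 0 * u 1 ^ a 1 * u 2 ^ (a 2 + 1)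

/-- `H_a(u₁,u₂,u₃) = u₁^{a₁}u₂^{a₂}u₃^{a₃}`. -/
def Ha (a : Fin 3 → ℕ) : (Fin 3 → ℂ) → ℂ :=
  fun u => u 0 ^ a 0 * u 1 ^ a 1 * u 2 ^ a 2

/-- Determinant of a matrix of natural numbers, computed over `ℤ`. -/
def detZ (M : Matrix (Fin 3) (Fin 3) ℕ) : ℤ :=
  (M.map (fun n : ℕ => (n : ℤ))).det

/-- `f` has an isolated critical point at the origin of `ℂ³`: the derivative of `f`
vanishes at `0`, and there is a punctured neighborhood of `0` containing no critical
point of `f`. -/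
def IsolatedCriticalAtZero (f : (Fin 3 → ℂ) → ℂ) : Prop :=
  fderiv ℂ f 0 = 0 ∧
  ∃ ε : ℝ, ε > 0 ∧ ∀ p : Fin 3 → ℂ, p ≠ 0 → ‖p‖ < ε → fderiv ℂ f p ≠ 0

/-!
Since `B_a` is the rank-one perturbation `1 + (1,1,1)ᵀ a` of the identity, `det B_a = 1 + ∑ aᵢ`;
taking determinants in `B_a = C D` with `|det D| = 1` therefore determines `|det C|`.
For existence take `f_C = x z³ + y³ + x² z`, which becomes the normal form `x² z + y³ + z⁵` of
`Q₁₂` after completing the square in `x` and rescaling. It is a power of `y` plus a loop polynomial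
in `x` and `z`, and a combination of the two partial derivatives of the loop polynomial forces one
of `x`, `z` to vanish at a critical point, after which the other vanishes too.
-/

section Determinant

theorem detZ_mul (C D : Matrix (Fin 3) (Fin 3) ℕ) : detZ (C * D) = detZ C * detZ D := by
  rw [detZ, detZ, detZ, ← det_mul]
  exact congrArg det (Matrix.map_mul (f := Nat.castRingHom ℤ))

theorem detZ_Bmat (a : Fin 3 → ℕ) : detZ (Bmat a) = 1 + ∑ i, (a i : ℤ) := by
  have map_Bmat : (Bmat a).map (fun n : ℕ => (n : ℤ)) =
      1 + replicateCol Unit (1 : Fin 3 → ℤ) * replicateRow Unit (fun j => (a j : ℤ)) := by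
    ext i j
    simp [Bmat, Matrix.mul_apply, Matrix.one_apply, add_comm]
  rw [detZ, map_Bmat, det_one_add_replicateCol_mul_replicateRow, dotProduct_one]

theorem abs_detZ_of_Bmat_eq_mul {a : Fin 3 → ℕ} {C D : Matrix (Fin 3) (Fin 3) ℕ}
    (hD : |detZ D| = 1) (hB : Bmat a = C * D) :
    |detZ C| = 1 + ∑ i, (a i : ℤ) := by
  calc |detZ C| = |detZ (Bmat a)| := by rw [hB, detZ_mul, abs_mul, hD, mul_one]
    _ = 1 + ∑ i, (a i : ℤ) := by rw [detZ_Bmat, abs_of_nonneg (by positivity)]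

end Determinant

section CriticalPoints

theorem hasFDerivAt_prod_pow {𝕜 ι : Type*} [NontriviallyNormedField 𝕜] [Fintype ι]
    [DecidableEq ι] (e : ι → ℕ) (p : ι → 𝕜) :
    HasFDerivAt (fun v : ι → 𝕜 => ∏ j, v j ^ e j)
      (∑ k, (e k * ∏ j, p j ^ (e j - if j = k then 1 else 0)) •
        (ContinuousLinearMap.proj k : (ι → 𝕜) →L[𝕜] 𝕜)) p := by
  refine (HasFDerivAt.finsetProd fun k _ => (hasFDerivAt_apply k p).pow (e k)).congr_fderiv ?_
  refine Finset.sum_congr rfl fun k _ => ?_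
  have prod_erase : ∏ j ∈ Finset.univ.erase k, p j ^ (e j - if j = k then 1 else 0) =
      ∏ j ∈ Finset.univ.erase k, p j ^ e j :=
    Finset.prod_congr rfl fun j hj => by rw [if_neg (Finset.ne_of_mem_erase hj), Nat.sub_zero]
  rw [← Finset.mul_prod_erase _ _ (Finset.mem_univ k), prod_erase, if_pos rfl, smul_smul,
    nsmul_eq_mul]
  congr 1
  ring

/-- The partial derivative of `f_C` in the `k`-th coordinate. The truncated exponent `0 - 1` only
occurs in terms whose coefficient `C i k` is zero. -/
def partialFC (C : Matrix (Fin 3) (Fin 3) ℕ) (k : Fin 3) (p : Fin 3 → ℂ) : ℂ :=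
  ∑ i, C i k * ∏ j, p j ^ (C i j - if j = k then 1 else 0)

theorem hasFDerivAt_fC (C : Matrix (Fin 3) (Fin 3) ℕ) (p : Fin 3 → ℂ) :
    HasFDerivAt (fC C)
      (∑ k, partialFC C k p • (ContinuousLinearMap.proj k : (Fin 3 → ℂ) →L[ℂ] ℂ)) p := by
  refine (HasFDerivAt.fun_sum fun i _ => hasFDerivAt_prod_pow (C i) p).congr_fderiv ?_
  rw [Finset.sum_comm]
  exact Finset.sum_congr rfl fun k _ => Finset.sum_smul.symm

theorem fderiv_fC_eq_zero_iff {C : Matrix (Fin 3) (Fin 3) ℕ} {p : Fin 3 → ℂ} :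
    fderiv ℂ (fC C) p = 0 ↔ ∀ k, partialFC C k p = 0 := by
  rw [(hasFDerivAt_fC C p).fderiv]
  refine ⟨fun h k => ?_, fun h => by ext v; simp [h]⟩
  simpa [Pi.single_apply] using congrArg (fun L => L (Pi.single k 1)) h

theorem isolatedCriticalAtZero_of_fderiv_eq_zero_iff {f : (Fin 3 → ℂ) → ℂ}
    (h : ∀ p, fderiv ℂ f p = 0 ↔ p = 0) : IsolatedCriticalAtZero f :=
  ⟨(h 0).2 rfl, 1, one_pos, fun p hp _ => mt (h p).1 hp⟩

end CriticalPoints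

section LoopFermat

/-- The exponent matrix of `x zⁿ⁺¹ + yᵏ⁺¹ + xᵐ⁺¹ z`, the sum of a loop polynomial in `x, z` and a
Fermat polynomial in `y`. Exponents are shifted by one to keep truncated subtraction out of the
partial derivatives. -/
def loopFermat (m n k : ℕ) : Matrix (Fin 3) (Fin 3) ℕ :=
  !![1, 0, n + 1; 0, k + 1, 0; m + 1, 0, 1]

variable {m n k : ℕ}

theorem fderiv_fC_loopFermat_eq_zero_iff_partials {p : Fin 3 → ℂ} :
    fderiv ℂ (fC (loopFermat m n k)) p = 0 ↔
      p 2 ^ (n + 1) + (m + 1) * p 0 ^ m * p 2 = 0 ∧ (k + 1) * p 1 ^ k = 0 ∧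
        (n + 1) * p 0 * p 2 ^ n + p 0 ^ (m + 1) = 0 := by
  simp [fderiv_fC_eq_zero_iff, Fin.forall_fin_succ, partialFC, loopFermat, Fin.sum_univ_three,
    Fin.prod_univ_three, mul_assoc]

theorem eq_zero_and_eq_zero_of_loop_critical {R : Type*} [CommRing R] [IsDomain R] [CharZero R]
    (hm : m ≠ 0) (hn : n ≠ 0) {x z : R} (hx : z ^ (n + 1) + (m + 1) * x ^ m * z = 0)
    (hz : (n + 1) * x * z ^ n + x ^ (m + 1) = 0) : x = 0 ∧ z = 0 := by
  -- The combination `(n + 1) x ∂ₓ - z ∂_z` cancels `x zⁿ⁺¹`.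
  have coeff_mul_eq_zero : ((m * n + m + n : ℕ) : R) * (x ^ (m + 1) * z) = 0 := by
    push_cast
    linear_combination (n + 1) * x * hx - z * hz
  have coeff_ne_zero : ((m * n + m + n : ℕ) : R) ≠ 0 := Nat.cast_ne_zero.2 (by simp [hm])
  rcases mul_eq_zero.1 ((mul_eq_zero.1 coeff_mul_eq_zero).resolve_left coeff_ne_zero)
    with pow_eq_zero | rfl
  · obtain rfl := eq_zero_of_pow_eq_zero pow_eq_zero
    exact ⟨rfl, by simpa [hm] using hx⟩
  · exact ⟨by simpa [hn] using hz, rfl⟩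

theorem fderiv_fC_loopFermat_eq_zero_iff (hm : m ≠ 0) (hn : n ≠ 0) (hk : k ≠ 0)
    (p : Fin 3 → ℂ) : fderiv ℂ (fC (loopFermat m n k)) p = 0 ↔ p = 0 := by
  rw [fderiv_fC_loopFermat_eq_zero_iff_partials]
  constructor
  · rintro ⟨hx, hy, hz⟩
    obtain ⟨x_eq_zero, z_eq_zero⟩ := eq_zero_and_eq_zero_of_loop_critical hm hn hx hz
    have y_eq_zero : p 1 = 0 :=
      eq_zero_of_pow_eq_zero ((mul_eq_zero.1 hy).resolve_left (Nat.cast_add_one_ne_zero k))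
    ext i
    fin_cases i <;> assumption
  · rintro rfl
    simp [hn, hk]

theorem isolatedCriticalAtZero_fC_loopFermat (hm : m ≠ 0) (hn : n ≠ 0) (hk : k ≠ 0) :
    IsolatedCriticalAtZero (fC (loopFermat m n k)) :=
  isolatedCriticalAtZero_of_fderiv_eq_zero_iff (fderiv_fC_loopFermat_eq_zero_iff hm hn hk)

end LoopFermat

theorem stmt_17_general :
    (∃ C D : Matrix (Fin 3) (Fin 3) ℕ,
      |detZ D| = 1 ∧
      Bmat ![3, 5, 6] = C * D ∧
      (∀ j, (∑ i : Fin 3, D i j) = ![3, 5, 6] j) ∧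
      IsolatedCriticalAtZero (fC C)) ∧
    (∀ (a : Fin 3 → ℕ) (C D : Matrix (Fin 3) (Fin 3) ℕ),
      |detZ D| = 1 →
      Bmat a = C * D →
      |detZ C| = 1 + ∑ i, (a i : ℤ)) := by
  refine ⟨⟨loopFermat 1 2 2, !![1, 2, 3; 1, 2, 2; 1, 1, 1], ?_, ?_, ?_, ?_⟩,
    fun _ _ _ => abs_detZ_of_Bmat_eq_mul⟩
  · simp [detZ, det_fin_three]
  · decide
  · decide
  · exact isolatedCriticalAtZero_fC_loopFermat one_ne_zero two_ne_zero two_ne_zero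

theorem stmt_17 :
    (∃ C D : Matrix (Fin 3) (Fin 3) ℕ,
      |detZ D| = 1 ∧
      Bmat ![3, 5, 6] = C * D ∧
      (∀ j, (∑ i : Fin 3, D i j) = ![3, 5, 6] j) ∧
      IsolatedCriticalAtZero (fC C)) ∧
    (∀ C D : Matrix (Fin 3) (Fin 3) ℕ,
      |detZ D| = 1 →
      Bmat ![3, 5, 6] = C * D →
      (∀ j, (∑ i : Fin 3, D i j) = ![3, 5, 6] j) →
      IsolatedCriticalAtZero (fC C) →
      |detZ C| = 15) := by
  refine ⟨stmt_17_general.1, fun C D hD hB _ _ => ?_⟩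
  simpa [Fin.sum_univ_three] using stmt_17_general.2 _ C D hD hB
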